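/- For u ∈ H^{ℓ+1}(𝕊¹) with ℓ ≥ 1, the commutator u ∂ₓ^{ℓ+1}u - ∂ₓ^ℓ(u ∂ₓu) satisfies ‖u ∂ₓ^{ℓ+1}u - ∂ₓ^ℓ(u ∂ₓu)‖_{L²(𝕊¹)} ≤ C(ℓ) ‖∂ₓu‖_{L^∞(𝕊¹)} ‖∂ₓ^ℓ u‖_{L²(𝕊¹)}. -/

import Mathlib

open Real MeasureTheory

theorem aux_deriv (q : ℝ) (hq : 0 < q) (x : ℝ) :
    HasDerivAt (fun y : ℝ => |y| ^ q * y) ((q + 1) * |x| ^ q) x := by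
  rcases eq_or_ne x 0 with rfl | hx
  · rw [hasDerivAt_iff_tendsto_slope]
    have h0 : (q + 1) * |(0:ℝ)| ^ q = 0 := by simp [Real.zero_rpow hq.ne']
    rw [h0]
    have hc : Continuous (fun y : ℝ => |y| ^ q) :=
      continuous_abs.rpow_const (fun _ => Or.inr hq.le)
    have ht : Filter.Tendsto (fun y : ℝ => |y| ^ q) (nhdsWithin 0 {0}ᶜ) (nhds 0) := by
      have := hc.tendsto 0
      simp only [abs_zero, Real.zero_rpow hq.ne'] at this
      exact this.mono_left nhdsWithin_le_nhds
    refine ht.congr' ?_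
    filter_upwards [self_mem_nhdsWithin] with y hy
    have hy' : y ≠ 0 := hy
    simp [slope_def_field]
    field_simp
  · have h1 : HasDerivAt (fun y : ℝ => |y|) (SignType.sign x : ℝ) x := hasDerivAt_abs hx
    have h2 := (h1.rpow_const (p := q) (Or.inl (abs_ne_zero.mpr hx))).mul (hasDerivAt_id x)
    refine h2.congr_deriv ?_
    have h3 : (SignType.sign x : ℝ) * x = |x| := sign_mul_self x
    have h4 : |x| ^ (q - 1) * |x| = |x| ^ q := by
      rw [← Real.rpow_add_one (abs_ne_zero.mpr hx)]; ring_nf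
    simp only [id]
    calc _ = q * (|x| ^ (q-1) * ((SignType.sign x : ℝ) * x)) + |x| ^ q := by ring
      _ = _ := by rw [h3, h4]; ring

theorem aux_ibp (q : ℝ) (hq : 0 < q) (f f1 f2 : ℝ → ℝ)
    (h1 : ∀ x, HasDerivAt f (f1 x) x) (h2 : ∀ x, HasDerivAt f1 (f2 x) x)
    (hc2 : Continuous f2) (hp : f 1 = f 0) (hp1 : f1 1 = f1 0) :
    ∫ x in (0:ℝ)..1, |f1 x| ^ (q + 2) ≤
      ∫ x in (0:ℝ)..1, (q + 1) * (|f x| * |f2 x| * |f1 x| ^ q) := by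
  have hc : Continuous f := continuous_iff_continuousAt.mpr fun x => (h1 x).continuousAt
  have hc1 : Continuous f1 := continuous_iff_continuousAt.mpr fun x => (h2 x).continuousAt
  have hcq : Continuous (fun x => |f1 x| ^ q) :=
    hc1.abs.rpow_const (fun _ => Or.inr hq.le)
  have hcq2 : Continuous (fun x => |f1 x| ^ (q+2)) :=
    hc1.abs.rpow_const (fun _ => Or.inr (by linarith))
  have hpow : ∀ x, |f1 x| ^ (q + 2) = f1 x * (|f1 x| ^ q * f1 x) := by
    intro x
    rw [Real.rpow_add_of_nonneg (abs_nonneg _) hq.le (by norm_num)]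
    have : |f1 x| ^ (2:ℝ) = f1 x ^ 2 := by
      rw [← sq_abs (f1 x)]; exact_mod_cast Real.rpow_natCast _ 2
    rw [this]; ring
  have hd : ∀ x, HasDerivAt (fun y => f y * (|f1 y| ^ q * f1 y))
      (|f1 x| ^ (q + 2) + (q + 1) * (f x * f2 x * |f1 x| ^ q)) x := by
    intro x
    have := (h1 x).mul ((aux_deriv q hq (f1 x)).comp x (h2 x))
    refine this.congr_deriv ?_
    rw [hpow]; simp only [Function.comp]; ring
  have hint := intervalIntegral.integral_eq_sub_of_hasDerivAt (a := 0) (b := 1)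
    (fun x _ => hd x) (Continuous.intervalIntegrable (by fun_prop) _ _)
  rw [intervalIntegral.integral_add (Continuous.intervalIntegrable (by fun_prop) _ _)
    (Continuous.intervalIntegrable (by fun_prop) _ _), hp, hp1, sub_self] at hint
  have : ∫ x in (0:ℝ)..1, |f1 x| ^ (q + 2)
      = ∫ x in (0:ℝ)..1, -((q + 1) * (f x * f2 x * |f1 x| ^ q)) := by
    rw [intervalIntegral.integral_neg]; linarith
  rw [this]
  apply intervalIntegral.integral_mono_on (by norm_num)
    (Continuous.intervalIntegrable (by fun_prop) _ _)
    (Continuous.intervalIntegrable (by fun_prop) _ _)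
  intro x _
  have hle : -(f x * f2 x) ≤ |f x| * |f2 x| := by
    rw [← abs_mul]; exact neg_le_abs _
  have hnn : 0 ≤ |f1 x| ^ q := by positivity
  have := mul_le_mul_of_nonneg_right hle hnn
  nlinarith

theorem aux_young (w0 w1 w2 : ℝ) (h0 : 0 ≤ w0) (h1 : 0 < w1) (h2 : 0 ≤ w2)
    (hs : w0 + w1 + w2 = 1) (ε : ℝ) (hε : 0 < ε) :
    ∃ K : ℝ, 0 < K ∧ ∀ a b c : ℝ, 0 ≤ a → 0 ≤ b → 0 ≤ c →
      a ^ w0 * b ^ w1 * c ^ w2 ≤ ε * a + K * b + ε * c := by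
  set K := (ε ^ w0 * ε ^ w2) ^ (-w1⁻¹) with hK
  have hKp : 0 < K := by positivity
  refine ⟨K, hKp, fun a b c ha hb hc => ?_⟩
  have hE : 0 < ε ^ w0 * ε ^ w2 := by positivity
  have hK1 : K ^ w1 = (ε ^ w0 * ε ^ w2)⁻¹ := by
    rw [hK, ← Real.rpow_mul hE.le, neg_mul, inv_mul_cancel₀ h1.ne', Real.rpow_neg_one]
  have := Real.geom_mean_le_arith_mean3_weighted h0 h1.le h2 (mul_nonneg hε.le ha)
    (mul_nonneg hKp.le hb) (mul_nonneg hε.le hc) hs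
  rw [Real.mul_rpow hε.le ha, Real.mul_rpow hKp.le hb, Real.mul_rpow hε.le hc, hK1] at this
  have e : ε ^ w0 * a ^ w0 * ((ε ^ w0 * ε ^ w2)⁻¹ * b ^ w1) * (ε ^ w2 * c ^ w2)
      = a ^ w0 * b ^ w1 * c ^ w2 := by
    field_simp
  rw [e] at this
  have A : 0 ≤ ε * a := by positivity
  have B : 0 ≤ K * b := by positivity
  have D : 0 ≤ ε * c := by positivity
  nlinarith

/-- A 1-periodic chain of successive derivatives with the zeroth one bounded by one. -/
structure AuxChain (D : ℕ → ℝ → ℝ) : Prop where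
  der : ∀ i x, HasDerivAt (D i) (D (i + 1) x) x
  per : ∀ i, D i 1 = D i 0
  bd : ∀ x, |D 0 x| ≤ 1

theorem AuxChain.cont {D : ℕ → ℝ → ℝ} (h : AuxChain D) (i : ℕ) : Continuous (D i) :=
  continuous_iff_continuousAt.mpr fun x => (h.der i x).continuousAt

theorem AuxChain.contp {D : ℕ → ℝ → ℝ} (h : AuxChain D) (i : ℕ) (p : ℝ) (hp : 0 ≤ p) :
    Continuous (fun x => |D i x| ^ p) :=
  (h.cont i).abs.rpow_const (fun _ => Or.inr hp)

theorem aux_step (m : ℕ) (i : ℕ) (him : i + 1 < m) :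
    ∃ C : ℝ, 0 < C ∧ ∀ D : ℕ → ℝ → ℝ, AuxChain D →
      ∫ x in (0:ℝ)..1, |D (i + 1) x| ^ (2 * m / (i + 1) : ℝ) ≤
        C * ∫ x in (0:ℝ)..1, |D (i + 2) x| ^ (2 * m / (i + 2) : ℝ) := by
  induction i with
  | zero =>
    have hm : (1:ℝ) < m := by exact_mod_cast him
    have hm0 : (0:ℝ) < m := by linarith
    obtain ⟨K, hK, hY⟩ := aux_young 0 (1 / m) (1 - 1 / m) le_rfl (by positivity)
      (by rw [sub_nonneg, div_le_one hm0]; exact hm.le) (by ring)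
      (1 / (2 * (2 * m - 1))) (by apply div_pos <;> linarith)
    have h21 : (0:ℝ) < 2 * m - 1 := by linarith
    refine ⟨2 * (2 * m - 1) * K, by positivity, fun D hD => ?_⟩
    have hI := aux_ibp (2 * m - 2) (by linarith) (D 0) (D 1) (D 2) (hD.der 0) (hD.der 1)
      (hD.cont 2) (hD.per 0) (hD.per 1)
    have hc1 := hD.contp 1 (2 * m - 2) (by linarith)
    have hc2 := hD.contp 1 (2 * m) (by linarith)
    have hc3 := hD.contp 2 m (by linarith)
    have k0 := hD.cont 0
    have k1 := hD.cont 1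
    have k2 := hD.cont 2
    have hle : ∫ x in (0:ℝ)..1, (2 * (m:ℝ) - 2 + 1) * (|D 0 x| * |D 2 x| * |D 1 x| ^ (2 * (m:ℝ) - 2))
        ≤ ∫ x in (0:ℝ)..1, ((2 * m - 1) * K * |D 2 x| ^ (m:ℝ) + 1 / 2 * |D 1 x| ^ (2 * m:ℝ)) := by
      apply intervalIntegral.integral_mono_on (by norm_num)
        (Continuous.intervalIntegrable (by fun_prop) _ _)
        (Continuous.intervalIntegrable (by fun_prop) _ _)
      intro x _
      have y := hY 0 (|D 2 x| ^ (m:ℝ)) (|D 1 x| ^ (2 * m:ℝ)) le_rfl (by positivity) (by positivity)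
      rw [← Real.rpow_mul (abs_nonneg _), ← Real.rpow_mul (abs_nonneg _), Real.rpow_zero,
        show (m:ℝ) * (1 / m) = 1 by field_simp,
        show 2 * (m:ℝ) * (1 - 1 / m) = 2 * m - 2 by field_simp, Real.rpow_one] at y
      have hb := hD.bd x
      have hnn : 0 ≤ |D 2 x| * |D 1 x| ^ (2 * (m:ℝ) - 2) := by positivity
      calc _ = (2 * (m:ℝ) - 1) * (|D 0 x| * (|D 2 x| * |D 1 x| ^ (2 * (m:ℝ) - 2))) := by ring
        _ ≤ (2 * (m:ℝ) - 1) * (1 * (|D 2 x| * |D 1 x| ^ (2 * (m:ℝ) - 2))) := by gcongr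
        _ ≤ (2 * (m:ℝ) - 1) * (1 / (2 * (2 * ↑m - 1)) * 0 + K * |D 2 x| ^ (m:ℝ) +
              1 / (2 * (2 * ↑m - 1)) * |D 1 x| ^ (2 * m:ℝ)) := by
            apply mul_le_mul_of_nonneg_left _ h21.le
            linarith
        _ = _ := by field_simp; ring
    replace hle := hI.trans hle
    rw [intervalIntegral.integral_add (Continuous.intervalIntegrable (by fun_prop) _ _)
      (Continuous.intervalIntegrable (by fun_prop) _ _),
      intervalIntegral.integral_const_mul, intervalIntegral.integral_const_mul] at hle
    have e1 : (2 * m / ((0:ℕ) + 1) : ℝ) = 2 * m := by simp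
    have e2 : (2 * m / ((0:ℕ) + 2) : ℝ) = m := by simp
    have e3 : (2 * m - 2 + 2 : ℝ) = 2 * m := by ring
    rw [e1, e2]
    rw [e3] at hle
    simp only [zero_add]
    linarith
  | succ i ih =>
    obtain ⟨C, hC, hCD⟩ := ih (by omega)
    have hm : (i:ℝ) + 2 < m := by exact_mod_cast him
    have hi : (0:ℝ) ≤ i := by positivity
    have hm0 : (0:ℝ) < m := by linarith
    set q : ℝ := 2 * m / (i + 2) - 2 with hq
    have hq0 : 0 < q := by
      rw [hq, sub_pos, lt_div_iff₀ (by positivity)]; linarith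
    obtain ⟨K, hK, hY⟩ := aux_young ((i + 1) / (2 * m)) ((i + 3) / (2 * m)) (1 - (i + 2) / m)
      (by positivity) (by positivity)
      (by rw [sub_nonneg, div_le_one hm0]; exact hm.le) (by field_simp; ring)
      (1 / (2 * (q + 1) * (C + 1))) (by positivity)
    refine ⟨2 * (q + 1) * K, by positivity, fun D hD => ?_⟩
    have hI := aux_ibp q hq0 (D (i + 1)) (D (i + 2)) (D (i + 3)) (hD.der _) (hD.der _)
      (hD.cont _) (hD.per _) (hD.per _)
    have hc0 := hD.contp (i + 1) (2 * m / (i + 1)) (by positivity)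
    have hc1 := hD.contp (i + 2) q hq0.le
    have hc2 := hD.contp (i + 2) (2 * m / (i + 2)) (by positivity)
    have hc3 := hD.contp (i + 3) (2 * m / (i + 3)) (by positivity)
    have k0 := hD.cont (i + 1)
    have k1 := hD.cont (i + 2)
    have k2 := hD.cont (i + 3)
    have hle : ∫ x in (0:ℝ)..1, (q + 1) * (|D (i + 1) x| * |D (i + 3) x| * |D (i + 2) x| ^ q)
        ≤ ∫ x in (0:ℝ)..1, (1 / (2 * (C + 1)) * |D (i + 1) x| ^ (2 * m / (i + 1) : ℝ)
          + (q + 1) * K * |D (i + 3) x| ^ (2 * m / (i + 3) : ℝ)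
          + 1 / (2 * (C + 1)) * |D (i + 2) x| ^ (2 * m / (i + 2) : ℝ)) := by
      apply intervalIntegral.integral_mono_on (by norm_num)
        (Continuous.intervalIntegrable (by fun_prop) _ _)
        (Continuous.intervalIntegrable (by fun_prop) _ _)
      intro x _
      have y := hY (|D (i + 1) x| ^ (2 * m / (i + 1) : ℝ)) (|D (i + 3) x| ^ (2 * m / (i + 3) : ℝ))
        (|D (i + 2) x| ^ (2 * m / (i + 2) : ℝ)) (by positivity) (by positivity) (by positivity)
      rw [← Real.rpow_mul (abs_nonneg _), ← Real.rpow_mul (abs_nonneg _),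
        ← Real.rpow_mul (abs_nonneg _),
        show 2 * (m:ℝ) / (i + 1) * ((i + 1) / (2 * m)) = 1 by field_simp,
        show 2 * (m:ℝ) / (i + 3) * ((i + 3) / (2 * m)) = 1 by field_simp,
        show 2 * (m:ℝ) / (i + 2) * (1 - (i + 2) / m) = q by rw [hq]; field_simp,
        Real.rpow_one, Real.rpow_one] at y
      refine (mul_le_mul_of_nonneg_left y (by positivity : 0 ≤ q + 1)).trans (le_of_eq ?_)
      field_simp
    replace hle := hI.trans hle
    rw [intervalIntegral.integral_add (Continuous.intervalIntegrable (by fun_prop) _ _)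
      (Continuous.intervalIntegrable (by fun_prop) _ _),
      intervalIntegral.integral_add (Continuous.intervalIntegrable (by fun_prop) _ _)
      (Continuous.intervalIntegrable (by fun_prop) _ _),
      intervalIntegral.integral_const_mul, intervalIntegral.integral_const_mul,
      intervalIntegral.integral_const_mul] at hle
    have hprev := hCD D hD
    have e1 : (((i + 1 : ℕ) : ℝ) + 1) = i + 2 := by push_cast; ring
    have e2 : (((i + 1 : ℕ) : ℝ) + 2) = i + 3 := by push_cast; ring
    have e3 : q + 2 = 2 * m / (i + 2) := by rw [hq]; ring
    rw [e1, e2, show i + 1 + 1 = i + 2 from rfl, show i + 1 + 2 = i + 3 from rfl]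
    rw [e3] at hle
    set X := ∫ x in (0:ℝ)..1, |D (i + 1) x| ^ (2 * m / (i + 1) : ℝ)
    set Y := ∫ x in (0:ℝ)..1, |D (i + 2) x| ^ (2 * m / (i + 2) : ℝ)
    set Z := ∫ x in (0:ℝ)..1, |D (i + 3) x| ^ (2 * m / (i + 3) : ℝ)
    have h1 : 1 / (2 * (C + 1)) * X + 1 / (2 * (C + 1)) * Y ≤ 1 / 2 * Y := by
      calc _ ≤ 1 / (2 * (C + 1)) * (C * Y) + 1 / (2 * (C + 1)) * Y := by gcongr
        _ = _ := by field_simp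
    linarith

theorem aux_top (m : ℕ) (k : ℕ) : ∀ i : ℕ, 1 ≤ i → i + k = m →
    ∃ C : ℝ, 0 < C ∧ ∀ D : ℕ → ℝ → ℝ, AuxChain D →
      ∫ x in (0:ℝ)..1, |D i x| ^ (2 * m / i : ℝ) ≤
        C * ∫ x in (0:ℝ)..1, (D m x) ^ 2 := by
  induction k with
  | zero =>
    intro i hi him
    obtain rfl : i = m := by omega
    refine ⟨1, one_pos, fun D hD => le_of_eq ?_⟩
    have : (i:ℝ) ≠ 0 := by positivity
    rw [one_mul, show (2 * i / i : ℝ) = (2:ℕ) by field_simp; norm_num]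
    simp only [Real.rpow_natCast, sq_abs]
  | succ k ih =>
    intro i hi him
    obtain ⟨C, hC, h⟩ := ih (i + 1) (by omega) (by omega)
    obtain ⟨j, rfl⟩ : ∃ j, i = j + 1 := ⟨i - 1, by omega⟩
    obtain ⟨C', hC', h'⟩ := aux_step m j (by omega)
    refine ⟨C' * C, by positivity, fun D hD => ?_⟩
    have a := h D hD
    have b := h' D hD
    have e1 : (((j + 1 : ℕ) : ℝ)) = j + 1 := by push_cast; ring
    have e2 : (((j + 1 + 1 : ℕ) : ℝ)) = j + 2 := by push_cast; ring
    rw [e2] at a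
    rw [e1]
    refine b.trans ?_
    rw [mul_assoc]
    exact mul_le_mul_of_nonneg_left a hC'.le

theorem aux_prod (m i j : ℕ) (hij : i + j = m) :
    ∃ C : ℝ, 0 < C ∧ ∀ D : ℕ → ℝ → ℝ, AuxChain D →
      ∫ x in (0:ℝ)..1, (D i x * D j x) ^ 2 ≤ C * ∫ x in (0:ℝ)..1, (D m x) ^ 2 := by
  have base : ∀ D : ℕ → ℝ → ℝ, AuxChain D →
      ∫ x in (0:ℝ)..1, (D 0 x * D m x) ^ 2 ≤ 1 * ∫ x in (0:ℝ)..1, (D m x) ^ 2 := by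
    intro D hD
    have k0 := hD.cont 0
    have k1 := hD.cont m
    rw [one_mul]
    apply intervalIntegral.integral_mono_on (by norm_num)
      (Continuous.intervalIntegrable (by fun_prop) _ _)
      (Continuous.intervalIntegrable (by fun_prop) _ _)
    intro x _
    have : D 0 x ^ 2 ≤ 1 := by rw [sq_le_one_iff_abs_le_one]; exact hD.bd x
    rw [mul_pow]
    nlinarith [sq_nonneg (D m x)]
  rcases Nat.eq_zero_or_pos i with rfl | hi
  · obtain rfl : j = m := by omega
    exact ⟨1, one_pos, base⟩
  rcases Nat.eq_zero_or_pos j with rfl | hj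
  · obtain rfl : i = m := by omega
    refine ⟨1, one_pos, fun D hD => ?_⟩
    simpa only [mul_comm] using base D hD
  obtain ⟨C, hC, h⟩ := aux_top m j i hi hij
  obtain ⟨C', hC', h'⟩ := aux_top m i j hj (by omega)
  refine ⟨C + C', by positivity, fun D hD => ?_⟩
  have a := h D hD
  have b := h' D hD
  have hi0 : (0:ℝ) < i := by exact_mod_cast hi
  have hj0 : (0:ℝ) < j := by exact_mod_cast hj
  have hm : (i:ℝ) + j = m := by exact_mod_cast hij
  have hm0 : (0:ℝ) < m := by linarith
  have k0 := hD.cont i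
  have k1 := hD.cont j
  have hc0 := hD.contp i (2 * m / i) (by positivity)
  have hc1 := hD.contp j (2 * m / j) (by positivity)
  have hle : ∫ x in (0:ℝ)..1, (D i x * D j x) ^ 2 ≤
      ∫ x in (0:ℝ)..1, (|D i x| ^ (2 * m / i : ℝ) + |D j x| ^ (2 * m / j : ℝ)) := by
    apply intervalIntegral.integral_mono_on (by norm_num)
      (Continuous.intervalIntegrable (by fun_prop) _ _)
      (Continuous.intervalIntegrable (by fun_prop) _ _)
    intro x _
    have hA : 0 ≤ |D i x| ^ (2 * m / i : ℝ) := by positivity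
    have hB : 0 ≤ |D j x| ^ (2 * m / j : ℝ) := by positivity
    have y := Real.geom_mean_le_arith_mean2_weighted (w₁ := i / m) (w₂ := j / m)
      (by positivity) (by positivity) hA hB (by rw [← add_div, hm, div_self hm0.ne'])
    rw [← Real.rpow_mul (abs_nonneg _), ← Real.rpow_mul (abs_nonneg _),
      show 2 * (m:ℝ) / i * (i / m) = (2:ℕ) by field_simp; norm_num,
      show 2 * (m:ℝ) / j * (j / m) = (2:ℕ) by field_simp; norm_num,
      Real.rpow_natCast, Real.rpow_natCast, sq_abs, sq_abs] at y
    have l1 : (i:ℝ) / m ≤ 1 := by rw [div_le_one hm0]; linarith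
    have l2 : (j:ℝ) / m ≤ 1 := by rw [div_le_one hm0]; linarith
    rw [mul_pow]
    have := mul_le_mul_of_nonneg_right l1 hA
    have := mul_le_mul_of_nonneg_right l2 hB
    linarith
  rw [intervalIntegral.integral_add (Continuous.intervalIntegrable (by fun_prop) _ _)
      (Continuous.intervalIntegrable (by fun_prop) _ _)] at hle
  linarith

theorem aux_per (v : ℝ → ℝ) (hv : ∀ x, v (x + 1) = v x) (i : ℕ) :
    ∀ x, iteratedDeriv i v (x + 1) = iteratedDeriv i v x := by
  induction i with
  | zero => simpa using hv
  | succ i ih =>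
    intro x
    rw [iteratedDeriv_succ, ← deriv_comp_add_const]
    congr 1
    exact funext ih

theorem aux_scaled (m i j : ℕ) (hij : i + j = m) :
    ∃ C : ℝ, 0 < C ∧ ∀ v : ℝ → ℝ, ContDiff ℝ (⊤ : ℕ∞) v → (∀ x, v (x + 1) = v x) →
      ∀ M : ℝ, (∀ x, |v x| ≤ M) →
      ∫ x in (0:ℝ)..1, (iteratedDeriv i v x * iteratedDeriv j v x) ^ 2 ≤
        C * M ^ 2 * ∫ x in (0:ℝ)..1, (iteratedDeriv m v x) ^ 2 := by
  obtain ⟨C, hC, h⟩ := aux_prod m i j hij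
  refine ⟨C, hC, fun v hv hp M hM => ?_⟩
  have hM0 : 0 ≤ M := (abs_nonneg _).trans (hM 0)
  rcases hM0.eq_or_lt with h0 | hpos
  · have hv0 : v = fun _ => 0 := by
      funext x
      have := hM x
      rw [← h0] at this
      exact abs_nonpos_iff.mp this
    subst hv0
    simp [iteratedDeriv_const]
  · have hD : AuxChain (fun k x => iteratedDeriv k v x / M) := by
      refine ⟨fun k x => ?_, fun k => ?_, fun x => ?_⟩
      · have hd : DifferentiableAt ℝ (iteratedDeriv k v) x :=
          (hv.differentiable_iteratedDeriv k (by exact_mod_cast WithTop.coe_lt_top k)) x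
        have := hd.hasDerivAt
        rw [← iteratedDeriv_succ] at this
        exact this.div_const M
      · have := aux_per v hp k 0
        rw [zero_add] at this
        simp only [this]
      · simp only [iteratedDeriv_zero, abs_div, abs_of_pos hpos]
        rw [div_le_one hpos]
        exact hM x
    have key := h _ hD
    have e1 : ∀ x, (iteratedDeriv i v x / M * (iteratedDeriv j v x / M)) ^ 2
        = (M ^ 4)⁻¹ * (iteratedDeriv i v x * iteratedDeriv j v x) ^ 2 := by
      intro x; field_simp
    have e2 : ∀ x, (iteratedDeriv m v x / M) ^ 2 = (M ^ 2)⁻¹ * (iteratedDeriv m v x) ^ 2 := by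
      intro x; field_simp
    simp only [e1, e2, intervalIntegral.integral_const_mul] at key
    rw [inv_mul_le_iff₀ (by positivity)] at key
    refine key.trans (le_of_eq ?_)
    field_simp

/-- On the circle `𝕊¹ = ℝ/ℤ`, for `ℓ ≥ 1` there is a constant `C(ℓ)` such that
`‖u ∂ₓ^{ℓ+1}u - ∂ₓ^ℓ(u ∂ₓu)‖_{L²} ≤ C(ℓ) ‖∂ₓu‖_{L^∞} ‖∂ₓ^ℓ u‖_{L²}`
for all (smooth, periodic) `u`. -/
theorem stmt13 (ℓ : ℕ) (hℓ : 1 ≤ ℓ) :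
    ∃ C : ℝ, 0 < C ∧
      ∀ u : ℝ → ℝ, ContDiff ℝ (⊤ : ℕ∞) u → (∀ x, u (x + 1) = u x) →
        ∀ M : ℝ, (∀ x, |deriv u x| ≤ M) →
          Real.sqrt (∫ x in (0:ℝ)..1,
              (u x * iteratedDeriv (ℓ + 1) u x
                - iteratedDeriv ℓ (fun y => u y * deriv u y) x) ^ 2)
            ≤ C * M * Real.sqrt (∫ x in (0:ℝ)..1, (iteratedDeriv ℓ u x) ^ 2) := by
  obtain ⟨m, rfl⟩ : ∃ m, ℓ = m + 1 := ⟨ℓ - 1, by omega⟩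
  have hex : ∀ j : ℕ, ∃ C : ℝ, 0 < C ∧ (j ≤ m → ∀ v : ℝ → ℝ, ContDiff ℝ (⊤ : ℕ∞) v →
      (∀ x, v (x + 1) = v x) → ∀ M : ℝ, (∀ x, |v x| ≤ M) →
      ∫ x in (0:ℝ)..1, (iteratedDeriv j v x * iteratedDeriv (m - j) v x) ^ 2 ≤
        C * M ^ 2 * ∫ x in (0:ℝ)..1, (iteratedDeriv m v x) ^ 2) := by
    intro j
    by_cases hj : j ≤ m
    · obtain ⟨C, hC, h⟩ := aux_scaled m j (m - j) (by omega)
      exact ⟨C, hC, fun _ => h⟩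
    · exact ⟨1, one_pos, fun h => absurd h hj⟩
  choose c hc h using hex
  set S : ℝ := (m + 1) * ∑ j ∈ Finset.range (m + 1), ((m + 1).choose (j + 1) : ℝ) ^ 2 * c j with hS
  have hS0 : 0 ≤ S := by
    refine mul_nonneg (by positivity) (Finset.sum_nonneg fun j _ => ?_)
    have := hc j
    positivity
  refine ⟨Real.sqrt (S + 1), by positivity, fun u hu hp M hM => ?_⟩
  have hM0 : 0 ≤ M := (abs_nonneg _).trans (hM 0)
  set v := deriv u with hvdef
  have hv : ContDiff ℝ (⊤ : ℕ∞) v := by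
    have : ContDiff ℝ ((⊤ : ℕ∞) + 1 : WithTop ℕ∞) u := hu
    exact (contDiff_succ_iff_deriv.mp this).2.2
  have hvp : ∀ x, v (x + 1) = v x := by
    have := aux_per u hp 1
    simpa [iteratedDeriv_one] using this
  have hvc : ∀ k, Continuous (iteratedDeriv k v) := fun k =>
    hv.continuous_iteratedDeriv k (by exact_mod_cast le_top)
  have hL : ∀ x, u x * iteratedDeriv (m + 1 + 1) u x
      - iteratedDeriv (m + 1) (fun y => u y * v y) x
      = - ∑ j ∈ Finset.range (m + 1), ((m + 1).choose (j + 1) : ℝ) *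
          (iteratedDeriv j v x * iteratedDeriv (m - j) v x) := by
    intro x
    have hn : ((m + 1 : ℕ) : WithTop ℕ∞) ≤ ((⊤ : ℕ∞) : WithTop ℕ∞) := by exact_mod_cast le_top
    rw [iteratedDeriv_fun_mul (hu.contDiffAt.of_le hn) (hv.contDiffAt.of_le hn),
      Finset.sum_range_succ', iteratedDeriv_succ' (n := m + 1) (f := u)]
    simp only [iteratedDeriv_succ' (f := u), ← hvdef, iteratedDeriv_zero, Nat.choose_zero_right,
      Nat.add_sub_add_right, Nat.sub_zero, Nat.cast_one, one_mul, mul_assoc]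
    ring
  have hmain : ∫ x in (0:ℝ)..1, (u x * iteratedDeriv (m + 1 + 1) u x
      - iteratedDeriv (m + 1) (fun y => u y * v y) x) ^ 2 ≤
      S * M ^ 2 * ∫ x in (0:ℝ)..1, (iteratedDeriv m v x) ^ 2 := by
    simp only [hL, neg_sq]
    calc _ ≤ ∫ x in (0:ℝ)..1, ∑ j ∈ Finset.range (m + 1), (m + 1 : ℝ) *
          ((m + 1).choose (j + 1) : ℝ) ^ 2 *
            (iteratedDeriv j v x * iteratedDeriv (m - j) v x) ^ 2 := by
          apply intervalIntegral.integral_mono_on (by norm_num)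
            (Continuous.intervalIntegrable (by fun_prop) _ _)
            (Continuous.intervalIntegrable (by fun_prop) _ _)
          intro x _
          refine sq_sum_le_card_mul_sum_sq.trans (le_of_eq ?_)
          rw [Finset.card_range, Finset.mul_sum]
          refine Finset.sum_congr rfl fun j _ => ?_
          push_cast; ring
      _ = ∑ j ∈ Finset.range (m + 1), (m + 1 : ℝ) *
          ((m + 1).choose (j + 1) : ℝ) ^ 2 *
          ∫ x in (0:ℝ)..1, (iteratedDeriv j v x * iteratedDeriv (m - j) v x) ^ 2 := by
          rw [intervalIntegral.integral_finset_sum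
            (fun j _ => Continuous.intervalIntegrable (by fun_prop) _ _)]
          simp only [intervalIntegral.integral_const_mul]
      _ ≤ ∑ j ∈ Finset.range (m + 1), (m + 1 : ℝ) *
          ((m + 1).choose (j + 1) : ℝ) ^ 2 *
          (c j * M ^ 2 * ∫ x in (0:ℝ)..1, (iteratedDeriv m v x) ^ 2) := by
          refine Finset.sum_le_sum fun j hj => ?_
          have hj' : j ≤ m := by have := Finset.mem_range.mp hj; omega
          exact mul_le_mul_of_nonneg_left (h j hj' v hv hvp M hM) (by positivity)
      _ = _ := by
          rw [hS, Finset.mul_sum, Finset.sum_mul, Finset.sum_mul]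
          refine Finset.sum_congr rfl fun j _ => ?_
          ring
  rw [iteratedDeriv_succ' (n := m) (f := u), ← hvdef]
  have hI0 : 0 ≤ ∫ x in (0:ℝ)..1, (iteratedDeriv m v x) ^ 2 :=
    intervalIntegral.integral_nonneg (by norm_num) fun x _ => sq_nonneg _
  refine (Real.sqrt_le_sqrt (hmain.trans (?_ : _ ≤ (S + 1) * M ^ 2 *
    ∫ x in (0:ℝ)..1, (iteratedDeriv m v x) ^ 2))).trans (le_of_eq ?_)
  · gcongr; linarith
  · rw [Real.sqrt_mul (by positivity), Real.sqrt_mul (by positivity), Real.sqrt_sq hM0]
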